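/- Let α > 0 be a real number that is not an integer, let β ≥ 0 be real, and let δ be a real number with δ ≥ ⌈α⌉ + 1. Suppose that one of the following holds: (1) β is a nonnegative integer; (2) α = β; (3) ⌊β⌋ < α ≤ β. Then F_n^{(α,β),δ}(t) > 0 for all t ∈ (0, π] and all n ∈ ℕ (n ≥ 0). -/

import Mathlib

open MeasureTheory Real Set

/-- Generalized binomial coefficient `C(u, v) = Γ(u+1) / (Γ(v+1) Γ(u-v+1))`. -/
noncomputable def genBinom (u v : ℝ) : ℝ :=
  Real.Gamma (u + 1) / (Real.Gamma (v + 1) * Real.Gamma (u - v + 1))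

/-- Jacobi polynomial `P_n^{(a,b)}(x)`. -/
noncomputable def jacobiP (n : ℕ) (a b x : ℝ) : ℝ :=
  ∑ k ∈ Finset.range (n + 1),
    genBinom ((n : ℝ) + a) ((n : ℝ) - (k : ℝ)) * genBinom ((n : ℝ) + b) (k : ℝ) *
      ((x - 1) / 2) ^ k * ((x + 1) / 2) ^ (n - k)

/-- `F_n^{(α,β),δ}(t)`. -/
noncomputable def FJ (n : ℕ) (α β δ t : ℝ) : ℝ :=
  ∫ θ in (0:ℝ)..t, (t - θ) ^ δ * jacobiP n (α - 1/2) (β - 1/2) (Real.cos θ) *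
    (Real.sin (θ / 2)) ^ (2 * α) * (Real.cos (θ / 2)) ^ (2 * β)

/-!
For `β = 0` and an integer `m` in place of `α`, repeated integration by parts turns
`FJ n m 0 (m + 1)` into an `(m + 2)`-fold integral `z_m` of `sin (θ / 2) ^ (2 m) * P_n (cos θ)`.
The Jacobi equation gives `z_m'' + (n + m) ^ 2 z_m = c ∫ z_{m-1}` with `c > 0`, and the kernel
`(1 - cos (ω x)) / ω ^ 2` of `z'' + ω ^ 2 z = ∫ r` is nonnegative, so `z_m > 0` by induction on `m`;
larger `δ` only adds fractional integrations.

Positivity of all Jacobi coefficients of a fixed function, here `(t - θ)₊ ^ δ`, is then carried to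
other parameters. If the coefficients are positive for `(γ, η)`, then Parseval's identity for
`(γ, η)` makes them positive for `(α, β)` as soon as the Jacobi polynomials for `(α, β)`, multiplied
by the quotient of the two weights, have nonnegative `(γ, η)`-coefficients. This holds when one
parameter, or both if they are equal, is lowered by at most a factor of two, so that iterating
reaches every positive value. Raising `β` by `1` is a three-term contiguity relation.
-/

open Polynomial
open scoped InnerProductSpace

section GeneralizedBinomial

variable {u : ℝ}

lemma inv_Gamma_eq_mul_inv_Gamma_add_one (s : ℝ) : (Gamma s)⁻¹ = s * (Gamma (s + 1))⁻¹ := by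
  rcases eq_or_ne s 0 with rfl | hs
  · simp
  · rw [Gamma_add_one hs, mul_inv, mul_inv_cancel_left₀ hs]

lemma genBinom_neg_one (u : ℝ) : genBinom u (-1) = 0 := by
  simp [genBinom]

lemma genBinom_pos {v : ℝ} (hu : 0 < u + 1) (hv : 0 < v + 1)
    (huv : 0 < u - v + 1) : 0 < genBinom u v :=
  div_pos (Gamma_pos_of_pos hu) (mul_pos (Gamma_pos_of_pos hv) (Gamma_pos_of_pos huv))

lemma add_one_mul_genBinom_add_one (u v : ℝ) :
    (v + 1) * genBinom u (v + 1) = (u - v) * genBinom u v := by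
  have hv := inv_Gamma_eq_mul_inv_Gamma_add_one (v + 1)
  have huv := inv_Gamma_eq_mul_inv_Gamma_add_one (u - v)
  simp only [genBinom, div_eq_mul_inv, mul_inv, show u - (v + 1) + 1 = u - v by ring, hv, huv]
  ring

lemma sub_mul_genBinom_add_one_left (hu : u + 1 ≠ 0) (v : ℝ) :
    (u + 1 - v) * genBinom (u + 1) v = (u + 1) * genBinom u v := by
  have huv := inv_Gamma_eq_mul_inv_Gamma_add_one (u - v + 1)
  simp only [genBinom, div_eq_mul_inv, mul_inv, show u + 1 - v + 1 = u - v + 1 + 1 by ring, huv,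
    Gamma_add_one hu]
  ring

lemma add_one_mul_genBinom_add_one_add_one (hu : u + 1 ≠ 0) (v : ℝ) :
    (v + 1) * genBinom (u + 1) (v + 1) = (u + 1) * genBinom u v := by
  rw [add_one_mul_genBinom_add_one, sub_mul_genBinom_add_one_left hu]

lemma genBinom_add_one_add_one (hu : u + 1 ≠ 0) (v : ℝ) :
    genBinom (u + 1) (v + 1) = genBinom u v + genBinom u (v + 1) := by
  apply mul_left_cancel₀ hu
  linear_combination add_one_mul_genBinom_add_one_add_one hu v +
    sub_mul_genBinom_add_one_left hu (v + 1)

end GeneralizedBinomial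

/-- The polynomial `(1 - X) / 2`, which is `sin² (θ / 2)` at `X = cos θ`. -/
noncomputable def sinHalfSq : ℝ[X] := C (1 / 2) * (1 - X)

/-- The polynomial `(1 + X) / 2`, which is `cos² (θ / 2)` at `X = cos θ`. -/
noncomputable def cosHalfSq : ℝ[X] := C (1 / 2) * (1 + X)

local notation "𝔲" => sinHalfSq
local notation "𝔳" => cosHalfSq

section HomogeneousForms

lemma sinHalfSq_add_cosHalfSq : 𝔲 + 𝔳 = 1 := by
  have h : (C (1 / 2) * 2 : ℝ[X]) = 1 := by rw [← C_ofNat, ← C_mul]; norm_num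
  rw [sinHalfSq, cosHalfSq]
  linear_combination h

lemma derivative_sinHalfSq : derivative 𝔲 = C (-(1 / 2)) := by
  simp [sinHalfSq]

lemma derivative_cosHalfSq : derivative 𝔳 = C (1 / 2) := by
  simp [cosHalfSq]

lemma eval_sinHalfSq_cos (θ : ℝ) : eval (cos θ) 𝔲 = sin (θ / 2) ^ 2 := by
  simp only [sinHalfSq, eval_mul, eval_C, eval_sub, eval_one, eval_X]
  rw [sin_sq_eq_half_sub, mul_div_cancel₀ θ two_ne_zero]
  ring

lemma eval_cosHalfSq_cos (θ : ℝ) : eval (cos θ) 𝔳 = cos (θ / 2) ^ 2 := by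
  simp only [cosHalfSq, eval_mul, eval_C, eval_add, eval_one, eval_X]
  rw [cos_sq, mul_div_cancel₀ θ two_ne_zero]
  ring

lemma sinHalfSq_mul_derivative_pow (k : ℕ) :
    𝔲 * derivative (𝔲 ^ k) = C (-(k / 2 : ℝ)) * 𝔲 ^ k := by
  rcases k with _ | k
  · simp
  · rw [derivative_pow_succ, derivative_sinHalfSq]
    refine Polynomial.funext fun x => ?_
    simp only [eval_mul, eval_C, eval_pow]
    push_cast
    ring

lemma cosHalfSq_mul_derivative_pow (k : ℕ) :
    𝔳 * derivative (𝔳 ^ k) = C (k / 2 : ℝ) * 𝔳 ^ k := by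
  rcases k with _ | k
  · simp
  · rw [derivative_pow_succ, derivative_cosHalfSq]
    refine Polynomial.funext fun x => ?_
    simp only [eval_mul, eval_C, eval_pow]
    push_cast
    ring

/-- The form `∑ c k * 𝔲 ^ k * 𝔳 ^ (n - k)` of degree `n` in the half-angle polynomials
`𝔲 = sin² (θ / 2)` and `𝔳 = cos² (θ / 2)`, as a linear function of its coefficients. -/
noncomputable def halfAngleForm (n : ℕ) : (ℕ → ℝ) →ₗ[ℝ] ℝ[X] :=
  ∑ k ∈ Finset.range (n + 1), (LinearMap.proj k).smulRight (𝔲 ^ k * 𝔳 ^ (n - k))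

lemma halfAngleForm_apply (n : ℕ) (c : ℕ → ℝ) :
    halfAngleForm n c = ∑ k ∈ Finset.range (n + 1), C (c k) * (𝔲 ^ k * 𝔳 ^ (n - k)) := by
  simp [halfAngleForm, smul_eq_C_mul]

lemma C_mul_halfAngleForm (r : ℝ) (n : ℕ) (c : ℕ → ℝ) :
    C r * halfAngleForm n c = halfAngleForm n fun k => r * c k := by
  rw [← smul_eq_C_mul, ← map_smul]
  rfl

lemma halfAngleForm_succ_eq {n : ℕ} {x y z : ℕ → ℝ} (h_zero : z 0 = x 0)
    (h_succ : ∀ k, z (k + 1) = x (k + 1) + y k) (h_top : x (n + 1) = 0) :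
    halfAngleForm (n + 1) z = 𝔳 * halfAngleForm n x + 𝔲 * halfAngleForm n y := by
  have hx : 𝔳 * halfAngleForm n x =
      ∑ k ∈ Finset.range (n + 2), C (x k) * (𝔲 ^ k * 𝔳 ^ (n + 1 - k)) := by
    rw [Finset.sum_range_succ, h_top, C_0, zero_mul, add_zero, halfAngleForm_apply, Finset.mul_sum]
    refine Finset.sum_congr rfl fun k hk => ?_
    rw [Nat.sub_add_comm (Finset.mem_range_succ_iff.1 hk)]
    ring
  rw [hx, halfAngleForm_apply, halfAngleForm_apply, Finset.sum_range_succ',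
    Finset.sum_range_succ' _ (n + 1), h_zero, Finset.mul_sum, add_right_comm,
    ← Finset.sum_add_distrib]
  congr 1
  refine Finset.sum_congr rfl fun k _ => ?_
  rw [h_succ, C_add, Nat.add_sub_add_right]
  ring

lemma derivative_halfAngleForm_succ (n : ℕ) (c : ℕ → ℝ) :
    derivative (halfAngleForm (n + 1) c) =
      halfAngleForm n fun k => ((n + 1 - k) * c k - (k + 1) * c (k + 1)) / 2 := by
  have hterm : ∀ k ∈ Finset.range (n + 2), derivative (C (c k) * (𝔲 ^ k * 𝔳 ^ (n + 1 - k))) =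
      C ((n + 1 - k) * c k / 2) * (𝔲 ^ k * 𝔳 ^ (n - k)) -
        C (k * c k / 2) * (𝔲 ^ (k - 1) * 𝔳 ^ (n + 1 - k)) := by
    intro k hk
    rw [derivative_C_mul, derivative_mul, derivative_pow, derivative_pow, derivative_sinHalfSq,
      derivative_cosHalfSq, Nat.cast_sub (Finset.mem_range_succ_iff.1 hk),
      show n + 1 - k - 1 = n - k by omega]
    refine Polynomial.funext fun x => ?_
    simp only [eval_add, eval_sub, eval_mul, eval_C, eval_pow]
    push_cast
    ring
  rw [halfAngleForm_apply, derivative_sum, Finset.sum_congr rfl hterm, Finset.sum_sub_distrib,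
    Finset.sum_range_succ, Finset.sum_range_succ' (fun k : ℕ => C (k * c k / 2) * _),
    halfAngleForm_apply]
  push_cast
  simp only [sub_self, zero_mul, zero_div, C_0, add_zero, ← Finset.sum_sub_distrib,
    sub_div, C_sub, sub_mul]

lemma mul_derivative_halfAngleForm_add (n : ℕ) (c : ℕ → ℝ) (A B : ℝ) :
    𝔲 * 𝔳 * derivative (halfAngleForm n c) +
        C (1 / 2) * (C B * 𝔲 - C A * 𝔳) * halfAngleForm n c =
      𝔳 * halfAngleForm n (fun k => -(1 / 2) * (A + k) * c k) +
        𝔲 * halfAngleForm n (fun k => 1 / 2 * (B + (n - k)) * c k) := by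
  simp only [halfAngleForm_apply, derivative_sum, Finset.mul_sum, ← Finset.sum_add_distrib]
  refine Finset.sum_congr rfl fun k hk => ?_
  have hu := sinHalfSq_mul_derivative_pow k
  have hv := cosHalfSq_mul_derivative_pow (n - k)
  rw [Nat.cast_sub (Finset.mem_range_succ_iff.1 hk), div_eq_mul_one_div] at hv
  rw [div_eq_mul_one_div] at hu
  rw [derivative_C_mul, derivative_mul]
  simp only [C_mul, C_add, C_neg, C_sub] at hu hv ⊢
  linear_combination C (c k) * 𝔳 * 𝔳 ^ (n - k) * hu + C (c k) * 𝔲 * 𝔲 ^ k * hv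

end HomogeneousForms

section JacobiPolynomials

/-- The coefficient of `𝔲 ^ k * 𝔳 ^ (n - k)` in the Jacobi polynomial `P_n^{(a,b)}`. It vanishes
for `k = n + 1`, because `genBinom` is `0` at the pole of `Γ (v + 1)`. -/
noncomputable def jacobiCoeff (n : ℕ) (a b : ℝ) (k : ℕ) : ℝ :=
  (-1) ^ k * genBinom (n + a) (n - k) * genBinom (n + b) k

/-- The Jacobi polynomial `P_n^{(a,b)}` as an element of `ℝ[X]`; see `eval_jacobiPoly`. -/
noncomputable def jacobiPoly (n : ℕ) (a b : ℝ) : ℝ[X] :=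
  halfAngleForm n (jacobiCoeff n a b)

lemma eval_jacobiPoly (n : ℕ) (a b x : ℝ) : (jacobiPoly n a b).eval x = jacobiP n a b x := by
  rw [jacobiPoly, halfAngleForm_apply, eval_finsetSum, jacobiP]
  refine Finset.sum_congr rfl fun k _ => ?_
  have hpow : ((x - 1) / 2) ^ k = (-1) ^ k * eval x 𝔲 ^ k := by
    rw [← mul_pow]
    simp only [sinHalfSq, eval_mul, eval_C, eval_sub, eval_one, eval_X]
    ring
  have hv : (x + 1) / 2 = eval x 𝔳 := by
    simp only [cosHalfSq, eval_mul, eval_C, eval_add, eval_one, eval_X]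
    ring
  rw [hpow, hv]
  simp only [jacobiCoeff, eval_mul, eval_C, eval_pow]
  ring

lemma jacobiCoeff_succ_self (n : ℕ) (a b : ℝ) : jacobiCoeff n a b (n + 1) = 0 := by
  simp [jacobiCoeff, genBinom_neg_one]

lemma jacobiCoeff_zero_pos {a b : ℝ} (n : ℕ) (ha : -1 < a) (hb : -1 < b) :
    0 < jacobiCoeff n a b 0 := by
  have : (0 : ℝ) ≤ n := n.cast_nonneg
  simp only [jacobiCoeff, pow_zero, one_mul, Nat.cast_zero, sub_zero]
  exact mul_pos (genBinom_pos (by linarith) (by linarith) (by linarith))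
    (genBinom_pos (by linarith) (by linarith) (by linarith))

lemma jacobiPoly_zero (a b : ℝ) : jacobiPoly 0 a b = C (jacobiCoeff 0 a b 0) := by
  simp [jacobiPoly, halfAngleForm_apply]

lemma eval_one_jacobiPoly (n : ℕ) (a b : ℝ) :
    (jacobiPoly n a b).eval 1 = jacobiCoeff n a b 0 := by
  rw [jacobiPoly, halfAngleForm_apply, eval_finsetSum,
    Finset.sum_eq_single_of_mem 0 (by simp) fun k _ hk => by simp [sinHalfSq, hk]]
  norm_num [cosHalfSq]

lemma add_mul_jacobiCoeff_add_one_add_one (n : ℕ) (a b : ℝ) (k : ℕ) :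
    (a + k + 1) * jacobiCoeff n (a + 1) (b + 1) k = (n + 1 - k) * jacobiCoeff (n + 1) a b k := by
  have h := add_one_mul_genBinom_add_one (n + 1 + a) (n - k)
  simp only [jacobiCoeff]
  push_cast
  rw [← add_assoc, ← add_assoc, add_right_comm _ a, add_right_comm _ b, add_sub_right_comm]
  linear_combination -(-1) ^ k * genBinom (n + 1 + b) k * h

lemma sub_mul_jacobiCoeff_add_one_add_one (n : ℕ) (a b : ℝ) (k : ℕ) :
    (n + 1 + b - k) * jacobiCoeff n (a + 1) (b + 1) k =
      -((k + 1) * jacobiCoeff (n + 1) a b (k + 1)) := by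
  have h := add_one_mul_genBinom_add_one (n + 1 + b) k
  simp only [jacobiCoeff]
  push_cast
  rw [← add_assoc, ← add_assoc, add_right_comm _ a, add_right_comm _ b, add_sub_add_right_eq_sub,
    pow_succ]
  linear_combination -(-1) ^ k * genBinom (n + 1 + a) (n - k) * h

lemma derivative_jacobiPoly_succ (n : ℕ) (a b : ℝ) :
    derivative (jacobiPoly (n + 1) a b) =
      C ((n + a + b + 2) / 2) * jacobiPoly n (a + 1) (b + 1) := by
  rw [jacobiPoly, derivative_halfAngleForm_succ, jacobiPoly, C_mul_halfAngleForm]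
  congr 1 with k
  linear_combination -(1 / 2) * add_mul_jacobiCoeff_add_one_add_one n a b k -
    (1 / 2) * sub_mul_jacobiCoeff_add_one_add_one n a b k

lemma jacobiPoly_rodrigues (n : ℕ) (a b : ℝ) :
    𝔲 * 𝔳 * derivative (jacobiPoly n (a + 1) (b + 1)) +
        C (1 / 2) * (C (b + 1) * 𝔲 - C (a + 1) * 𝔳) * jacobiPoly n (a + 1) (b + 1) =
      C (-((n + 1) / 2) : ℝ) * jacobiPoly (n + 1) a b := by
  rw [jacobiPoly, jacobiPoly, C_mul_halfAngleForm, mul_derivative_halfAngleForm_add]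
  refine (halfAngleForm_succ_eq ?_ (fun k => ?_) ?_).symm
  · have h := add_mul_jacobiCoeff_add_one_add_one n a b 0
    push_cast at h ⊢
    linear_combination (1 / 2) * h
  · have h := add_mul_jacobiCoeff_add_one_add_one n a b (k + 1)
    push_cast at h ⊢
    linear_combination (1 / 2) * h - (1 / 2) * sub_mul_jacobiCoeff_add_one_add_one n a b k
  · rw [jacobiCoeff_succ_self, mul_zero]

lemma jacobiPoly_lower_left {n : ℕ} {a : ℝ} (b : ℝ) (h : n + a + 1 ≠ 0) :
    C (a + 1) * jacobiPoly n (a + 1) b +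
        𝔲 * (C (n : ℝ) * jacobiPoly n (a + 1) b -
          2 * 𝔳 * derivative (jacobiPoly n (a + 1) b)) =
      C (n + a + 1) * jacobiPoly n a b := by
  have hcoeff : ∀ k, (a + 1 + k) * jacobiCoeff n (a + 1) b k =
      (n + a + 1) * jacobiCoeff n a b k := by
    intro k
    have hG := sub_mul_genBinom_add_one_left h (n - k)
    simp only [jacobiCoeff, ← add_assoc]
    linear_combination (-1) ^ k * genBinom (n + b) k * hG
  have hsum : C (-2) * halfAngleForm n (fun k => -(1 / 2) * (0 + k) * jacobiCoeff n (a + 1) b k) +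
      C (a + 1) * jacobiPoly n (a + 1) b = C (n + a + 1) * jacobiPoly n a b := by
    simp only [jacobiPoly, C_mul_halfAngleForm, ← map_add]
    congr 1 with k
    simp only [Pi.add_apply]
    linear_combination hcoeff k
  have hD := mul_derivative_halfAngleForm_add n (jacobiCoeff n (a + 1) b) 0 (-n)
  have hforms : (fun k : ℕ => 1 / 2 * (-n + (n - k)) * jacobiCoeff n (a + 1) b k) =
      fun k : ℕ => -(1 / 2) * (0 + k) * jacobiCoeff n (a + 1) b k := by
    ext k
    ring
  rw [hforms, ← add_mul, add_comm 𝔳, sinHalfSq_add_cosHalfSq, one_mul] at hD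
  have htwo : (C (1 / 2) * 2 : ℝ[X]) = 1 := by rw [← C_ofNat, ← C_mul]; norm_num
  simp only [C_neg, C_0, C_ofNat] at hsum hD
  rw [← hD, ← jacobiPoly] at hsum
  linear_combination hsum - C (n : ℝ) * 𝔲 * jacobiPoly n (a + 1) b * htwo

lemma add_one_mul_jacobiCoeff_succ_zero {n : ℕ} {a b : ℝ} (ha : n + a + 1 ≠ 0)
    (hb : n + b + 1 ≠ 0) :
    (n + 1) * jacobiCoeff (n + 1) a b 0 =
      (2 * n + a + b + 2) * jacobiCoeff n a (b + 1) 0 - (n + b + 1) * jacobiCoeff n a b 0 := by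
  have hA := add_one_mul_genBinom_add_one_add_one ha n
  have hB := sub_mul_genBinom_add_one_left hb 0
  simp only [jacobiCoeff]
  push_cast
  rw [← add_assoc, add_right_comm _ 1 a, add_right_comm _ 1 b, sub_zero, sub_zero]
  linear_combination genBinom (n + b + 1) 0 * hA - genBinom (n + a) n * hB

lemma add_one_mul_jacobiCoeff_succ_succ {n : ℕ} {a b : ℝ} (ha : n + a + 1 ≠ 0)
    (hb : n + b + 1 ≠ 0) (k : ℕ) :
    (n + 1) * jacobiCoeff (n + 1) a b (k + 1) =
      (2 * n + a + b + 2) * jacobiCoeff n a (b + 1) (k + 1) -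
        (n + b + 1) * (jacobiCoeff n a b (k + 1) + jacobiCoeff n a b k) := by
  have hA := genBinom_add_one_add_one ha (n - (k + 1))
  have hA' := add_one_mul_genBinom_add_one (n + a) (n - (k + 1))
  have hB := sub_mul_genBinom_add_one_left hb (k + 1)
  have hB' := add_one_mul_genBinom_add_one_add_one hb k
  rw [sub_add_eq_sub_sub, sub_add_cancel] at hA hA'
  simp only [jacobiCoeff]
  push_cast
  rw [← add_assoc, add_right_comm _ 1 a, add_right_comm _ 1 b, add_sub_add_right_eq_sub, hA,
    pow_succ, sub_add_eq_sub_sub]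
  linear_combination (-1) ^ k * (genBinom (n + a) (n - k - 1) * hB -
    genBinom (n + a) (n - k) * hB' - genBinom (n + b + 1) (k + 1) * hA')

lemma jacobiPoly_raise_right {n : ℕ} {a b : ℝ} (ha : n + a + 1 ≠ 0) (hb : n + b + 1 ≠ 0) :
    C (2 * n + a + b + 2) * (𝔳 * jacobiPoly n a (b + 1)) =
      C (n + 1 : ℝ) * jacobiPoly (n + 1) a b + C (n + b + 1) * jacobiPoly n a b := by
  have hform : halfAngleForm (n + 1) (fun k => (n + 1) * jacobiCoeff (n + 1) a b k) =
      𝔳 * halfAngleForm n (fun k => (2 * n + a + b + 2) * jacobiCoeff n a (b + 1) k -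
        (n + b + 1) * jacobiCoeff n a b k) +
      𝔲 * halfAngleForm n (fun k => -((n + b + 1) * jacobiCoeff n a b k)) := by
    refine halfAngleForm_succ_eq (add_one_mul_jacobiCoeff_succ_zero ha hb) (fun k => ?_) ?_
    · rw [add_one_mul_jacobiCoeff_succ_succ ha hb]
      ring
    · simp only [jacobiCoeff_succ_self, mul_zero, sub_zero]
  have hx : halfAngleForm n (fun k => (2 * n + a + b + 2) * jacobiCoeff n a (b + 1) k -
      (n + b + 1) * jacobiCoeff n a b k) =
      C (2 * n + a + b + 2) * jacobiPoly n a (b + 1) - C (n + b + 1) * jacobiPoly n a b := by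
    simp only [jacobiPoly, C_mul_halfAngleForm, ← map_sub]
    rfl
  have hy : halfAngleForm n (fun k => -((n + b + 1) * jacobiCoeff n a b k)) =
      -(C (n + b + 1) * jacobiPoly n a b) := by
    simp only [jacobiPoly, C_mul_halfAngleForm, ← map_neg]
    rfl
  rw [jacobiPoly.eq_1 (n + 1), C_mul_halfAngleForm, hform, hx, hy]
  linear_combination C (n + b + 1) * jacobiPoly n a b * sinHalfSq_add_cosHalfSq

lemma jacobiPoly_ode (n : ℕ) (a b : ℝ) :
    4 * 𝔲 * 𝔳 * derivative (derivative (jacobiPoly n a b)) +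
      2 * (C (b + 1) * 𝔲 - C (a + 1) * 𝔳) * derivative (jacobiPoly n a b) +
      C (n * (n + a + b + 1)) * jacobiPoly n a b = 0 := by
  rcases n with _ | n
  · simp [jacobiPoly_zero]
  · have h := jacobiPoly_rodrigues n a b
    rw [derivative_jacobiPoly_succ, derivative_C_mul]
    refine Polynomial.funext fun x => ?_
    replace h := congrArg (eval x) h
    simp only [eval_add, eval_sub, eval_mul, eval_C, eval_ofNat, eval_zero] at h ⊢
    push_cast
    linear_combination 2 * (n + a + b + 2) * h

lemma degree_jacobiPoly (n : ℕ) {a b : ℝ} (ha : -1 < a) (hb : -1 < b) :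
    (jacobiPoly n a b).degree = n := by
  induction n generalizing a b with
  | zero => simp [jacobiPoly_zero, (jacobiCoeff_zero_pos 0 ha hb).ne']
  | succ n ih =>
    have : (0 : ℝ) ≤ n := n.cast_nonneg
    have hc : ((n + a + b + 2) / 2 : ℝ) ≠ 0 := by linarith
    have hdeg : (derivative (jacobiPoly (n + 1) a b)).degree = n := by
      rw [derivative_jacobiPoly_succ, degree_C_mul hc, ih (by linarith) (by linarith)]
    have hne : (jacobiPoly (n + 1) a b).natDegree ≠ 0 := fun h => by
      simp [derivative_of_natDegree_zero h] at hdeg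
    rw [degree_derivative hne, Nat.cast_inj] at hdeg
    rw [degree_eq_iff_natDegree_eq_of_pos n.succ_pos]
    omega

lemma span_range_jacobiPoly {a b : ℝ} (ha : -1 < a) (hb : -1 < b) :
    Submodule.span ℝ (range fun n => jacobiPoly n a b) = ⊤ := by
  let S : Polynomial.Sequence ℝ := ⟨fun n => jacobiPoly n a b, fun n => degree_jacobiPoly n ha hb⟩
  exact S.span fun i => (leadingCoeff_ne_zero.2 (S.ne_zero i)).isUnit

end JacobiPolynomials

section JacobiWeights

variable {α β γ η : ℝ}

/-- The trigonometric Jacobi weight `sin (θ / 2) ^ (2 α) * cos (θ / 2) ^ (2 β)`. -/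
noncomputable def jacobiWeight (α β θ : ℝ) : ℝ :=
  sin (θ / 2) ^ (2 * α) * cos (θ / 2) ^ (2 * β)

lemma continuous_jacobiWeight (hα : 0 ≤ α) (hβ : 0 ≤ β) : Continuous (jacobiWeight α β) :=
  ((continuous_sin.comp (continuous_id.div_const 2)).rpow_const fun _ => .inr (by positivity)).mul
    ((continuous_cos.comp (continuous_id.div_const 2)).rpow_const fun _ => .inr (by positivity))

lemma sin_half_pos {θ : ℝ} (hθ : θ ∈ Ioo 0 π) : 0 < sin (θ / 2) :=
  sin_pos_of_pos_of_lt_pi (by linarith [hθ.1]) (by linarith [hθ.1, hθ.2])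

lemma cos_half_pos {θ : ℝ} (hθ : θ ∈ Ioo 0 π) : 0 < cos (θ / 2) :=
  cos_pos_of_mem_Ioo ⟨by linarith [hθ.1, pi_pos], by linarith [hθ.2]⟩

lemma jacobiWeight_pos {θ : ℝ} (hθ : θ ∈ Ioo 0 π) : 0 < jacobiWeight α β θ :=
  mul_pos (rpow_pos_of_pos (sin_half_pos hθ) _) (rpow_pos_of_pos (cos_half_pos hθ) _)

lemma jacobiWeight_mul {θ : ℝ} (hα : 0 ≤ α) (hβ : 0 ≤ β) (hγ : 0 ≤ γ) (hη : 0 ≤ η)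
    (hθ : θ ∈ Icc 0 π) :
    jacobiWeight α β θ * jacobiWeight γ η θ = jacobiWeight (α + γ) (β + η) θ := by
  have hs : 0 ≤ sin (θ / 2) :=
    sin_nonneg_of_nonneg_of_le_pi (by linarith [hθ.1]) (by linarith [hθ.1, hθ.2])
  have hc : 0 ≤ cos (θ / 2) :=
    cos_nonneg_of_neg_pi_div_two_le_of_le (by linarith [hθ.1, pi_pos]) (by linarith [hθ.2])
  simp only [jacobiWeight, mul_add]
  rw [rpow_add_of_nonneg hs (by positivity) (by positivity),
    rpow_add_of_nonneg hc (by positivity) (by positivity)]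
  ring

lemma hasDerivAt_jacobiWeight_add_half (α β : ℝ) {θ : ℝ} (hθ : θ ∈ Ioo 0 π) :
    HasDerivAt (jacobiWeight (α + 1 / 2) (β + 1 / 2))
      (jacobiWeight α β θ * ((α + 1 / 2) * cos (θ / 2) ^ 2 - (β + 1 / 2) * sin (θ / 2) ^ 2)) θ := by
  have hs := sin_half_pos hθ
  have hc := cos_half_pos hθ
  have hhalf : HasDerivAt (fun θ : ℝ => θ / 2) (1 / 2) θ := (hasDerivAt_id θ).div_const 2
  refine ((hhalf.sin.rpow_const (p := 2 * (α + 1 / 2)) (.inl hs.ne')).mul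
    (hhalf.cos.rpow_const (p := 2 * (β + 1 / 2)) (.inl hc.ne'))).congr_deriv ?_
  have htwo : ∀ a : ℝ, 2 * (a + 1 / 2) = 2 * a + 1 := fun a => by ring
  rw [jacobiWeight, htwo, htwo, add_sub_cancel_right, add_sub_cancel_right, rpow_add_one hs.ne',
    rpow_add_one hc.ne']
  ring

/-- The integral over `[0, π]` of `g θ * R (cos θ)` against the Jacobi weight. -/
noncomputable def jacobiIntegral (g : C(ℝ, ℝ)) (α β : ℝ) (R : ℝ[X]) : ℝ :=
  ∫ θ in 0..π, g θ * (jacobiWeight α β θ * R.eval (cos θ))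

lemma continuous_jacobiWeight_mul_eval_cos (hα : 0 ≤ α) (hβ : 0 ≤ β) (R : ℝ[X]) :
    Continuous fun θ => jacobiWeight α β θ * R.eval (cos θ) :=
  (continuous_jacobiWeight hα hβ).mul (R.continuous.comp continuous_cos)

lemma jacobiIntegral_add (g : C(ℝ, ℝ)) (hα : 0 ≤ α) (hβ : 0 ≤ β) (P Q : ℝ[X]) :
    jacobiIntegral g α β (P + Q) = jacobiIntegral g α β P + jacobiIntegral g α β Q := by
  have hint : ∀ R : ℝ[X], IntervalIntegrable
      (fun θ => g θ * (jacobiWeight α β θ * R.eval (cos θ))) volume 0 π := fun R =>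
    (g.continuous.mul (continuous_jacobiWeight_mul_eval_cos hα hβ R)).intervalIntegrable _ _
  simp only [jacobiIntegral, eval_add, mul_add]
  exact intervalIntegral.integral_add (hint P) (hint Q)

lemma jacobiIntegral_C_mul (g : C(ℝ, ℝ)) (α β c : ℝ) (R : ℝ[X]) :
    jacobiIntegral g α β (C c * R) = c * jacobiIntegral g α β R := by
  simp only [jacobiIntegral, eval_mul, eval_C, mul_left_comm _ c,
    intervalIntegral.integral_const_mul]

lemma jacobiIntegral_sinHalfSq_mul (g : C(ℝ, ℝ)) (hα : 0 ≤ α) (hβ : 0 ≤ β) (R : ℝ[X]) :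
    jacobiIntegral g α β (𝔲 * R) = jacobiIntegral g (α + 1) β R := by
  refine intervalIntegral.integral_congr fun θ hθ => ?_
  rw [uIcc_of_le pi_pos.le] at hθ
  have hw := jacobiWeight_mul hα hβ zero_le_one le_rfl hθ
  simp only [jacobiWeight, mul_one, mul_zero, rpow_zero, rpow_two, add_zero] at hw ⊢
  rw [← hw, eval_mul, eval_sinHalfSq_cos]
  ring

lemma jacobiIntegral_cosHalfSq_mul (g : C(ℝ, ℝ)) (hα : 0 ≤ α) (hβ : 0 ≤ β) (R : ℝ[X]) :
    jacobiIntegral g α β (𝔳 * R) = jacobiIntegral g α (β + 1) R := by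
  refine intervalIntegral.integral_congr fun θ hθ => ?_
  rw [uIcc_of_le pi_pos.le] at hθ
  have hw := jacobiWeight_mul hα hβ le_rfl zero_le_one hθ
  simp only [jacobiWeight, mul_one, mul_zero, rpow_zero, rpow_two, add_zero, one_mul] at hw ⊢
  rw [← hw, eval_mul, eval_cosHalfSq_cos]
  ring

end JacobiWeights

section Connection

variable {α β γ η : ℝ}

/-- The moment functional of the Jacobi weight, on polynomials in `cos θ`. -/
noncomputable abbrev jacobiMoment (α β : ℝ) (R : ℝ[X]) : ℝ := jacobiIntegral 1 α β R

/-- The Jacobi polynomial `P_n^{(α - 1/2, β - 1/2)}`, for which `jacobiWeight α β` is the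
orthogonality weight in the variable `θ`. -/
noncomputable def jacobiHalf (n : ℕ) (α β : ℝ) : ℝ[X] := jacobiPoly n (α - 1 / 2) (β - 1 / 2)

lemma derivative_jacobiHalf_succ (n : ℕ) (α β : ℝ) :
    derivative (jacobiHalf (n + 1) α β) =
      C ((n + α + β + 1) / 2) * jacobiHalf n (α + 1) (β + 1) := by
  rw [jacobiHalf, derivative_jacobiPoly_succ, jacobiHalf, add_sub_right_comm α,
    add_sub_right_comm β]
  ring_nf

lemma jacobiMoment_one_pos (hα : 0 ≤ α) (hβ : 0 ≤ β) : 0 < jacobiMoment α β 1 := by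
  refine intervalIntegral.intervalIntegral_pos_of_pos_on ?_ (fun θ hθ => ?_) pi_pos
  · exact ((continuous_jacobiWeight_mul_eval_cos hα hβ 1).const_mul 1).intervalIntegrable _ _
  · simpa using jacobiWeight_pos hθ

lemma jacobiMoment_pearson (hα : 0 ≤ α) (hβ : 0 ≤ β) (R : ℝ[X]) :
    jacobiMoment α β (𝔲 * 𝔳 * derivative R +
      C (1 / 2) * (C (β + 1 / 2) * 𝔲 - C (α + 1 / 2) * 𝔳) * R) = 0 := by
  set S := 𝔲 * 𝔳 * derivative R + C (1 / 2) * (C (β + 1 / 2) * 𝔲 - C (α + 1 / 2) * 𝔳) * R with hS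
  have hderiv : ∀ θ ∈ Ioo 0 π, HasDerivAt
      (fun θ => jacobiWeight (α + 1 / 2) (β + 1 / 2) θ * R.eval (cos θ))
      (-2 * (jacobiWeight α β θ * S.eval (cos θ))) θ := by
    intro θ hθ
    refine ((hasDerivAt_jacobiWeight_add_half α β hθ).mul
      ((R.hasDerivAt (cos θ)).comp θ (hasDerivAt_cos θ))).congr_deriv ?_
    have hsin : sin θ = 2 * sin (θ / 2) * cos (θ / 2) := by
      rw [← sin_two_mul, mul_div_cancel₀ θ two_ne_zero]
    have hw : jacobiWeight (α + 1 / 2) (β + 1 / 2) θ =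
        jacobiWeight α β θ * (sin (θ / 2) * cos (θ / 2)) := by
      rw [← jacobiWeight_mul hα hβ one_half_pos.le one_half_pos.le (Ioo_subset_Icc_self hθ)]
      norm_num [jacobiWeight]
    simp only [hS, eval_add, eval_mul, eval_sub, eval_C, eval_sinHalfSq_cos, eval_cosHalfSq_cos,
      Function.comp_apply, hw, hsin]
    ring
  have hftc := intervalIntegral.integral_eq_sub_of_hasDerivAt_of_le pi_pos.le
    (continuous_jacobiWeight_mul_eval_cos (by positivity) (by positivity) R).continuousOn hderiv
    (((continuous_jacobiWeight_mul_eval_cos hα hβ S).const_mul (-2)).intervalIntegrable _ _)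
  have hπ : jacobiWeight (α + 1 / 2) (β + 1 / 2) π = 0 := by
    rw [jacobiWeight, cos_pi_div_two, zero_rpow (by positivity), mul_zero]
  have h0 : jacobiWeight (α + 1 / 2) (β + 1 / 2) 0 = 0 := by
    rw [jacobiWeight, zero_div, sin_zero, zero_rpow (by positivity), zero_mul]
  rw [intervalIntegral.integral_const_mul, hπ, h0] at hftc
  simpa [jacobiMoment, jacobiIntegral] using hftc

lemma jacobiMoment_mul_jacobiHalf_succ (hα : 0 ≤ α) (hβ : 0 ≤ β) (γ η : ℝ) (M : ℕ) (q : ℝ[X]) :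
    jacobiMoment α β (q * jacobiHalf (M + 1) γ η) = 2 / (M + 1) *
      jacobiMoment α β ((𝔲 * 𝔳 * derivative q +
        C (1 / 2) * (C (γ - α) * 𝔳 - C (η - β) * 𝔲) * q) * jacobiHalf M (γ + 1) (η + 1)) := by
  have hpearson := jacobiMoment_pearson hα hβ (q * jacobiHalf M (γ + 1) (η + 1))
  have hrod := jacobiPoly_rodrigues M (γ - 1 / 2) (η - 1 / 2)
  have hsplit : 𝔲 * 𝔳 * derivative (q * jacobiHalf M (γ + 1) (η + 1)) +
      C (1 / 2) * (C (β + 1 / 2) * 𝔲 - C (α + 1 / 2) * 𝔳) * (q * jacobiHalf M (γ + 1) (η + 1)) =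
      (𝔲 * 𝔳 * derivative q + C (1 / 2) * (C (γ - α) * 𝔳 - C (η - β) * 𝔲) * q) *
        jacobiHalf M (γ + 1) (η + 1) + C (-((M + 1) / 2) : ℝ) * (q * jacobiHalf (M + 1) γ η) := by
    rw [derivative_mul]
    simp only [jacobiHalf, add_sub_right_comm _ (1 : ℝ)]
    have hβ' : C (β + 1 / 2) = C (η - 1 / 2 + 1) - C (η - β) := by rw [← C_sub]; ring_nf
    have hα' : C (α + 1 / 2) = C (γ - 1 / 2 + 1) - C (γ - α) := by rw [← C_sub]; ring_nf
    rw [hα', hβ']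
    linear_combination q * hrod
  rw [hsplit, jacobiMoment, jacobiIntegral_add _ hα hβ, jacobiIntegral_C_mul] at hpearson
  field_simp
  linear_combination -2 * hpearson

lemma jacobiMoment_jacobiHalf_succ_mul_succ (hα : 0 ≤ α) (hβ : 0 ≤ β) (γ η : ℝ) (k N : ℕ) :
    jacobiMoment α β (jacobiHalf (k + 1) α β * jacobiHalf (N + 1) γ η) =
      (N + γ + η + 1) / (k + 1) * jacobiMoment (α + 1) (β + 1)
        (jacobiHalf k (α + 1) (β + 1) * jacobiHalf N (γ + 1) (η + 1)) := by
  have hshift : (𝔲 * 𝔳 * derivative (jacobiHalf (N + 1) γ η) +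
      C (1 / 2) * (C (α - α) * 𝔳 - C (β - β) * 𝔲) * jacobiHalf (N + 1) γ η) *
        jacobiHalf k (α + 1) (β + 1) =
      C ((N + γ + η + 1) / 2) *
        (𝔲 * (𝔳 * (jacobiHalf k (α + 1) (β + 1) * jacobiHalf N (γ + 1) (η + 1)))) := by
    rw [derivative_jacobiHalf_succ, sub_self, sub_self, C_0]
    ring
  rw [mul_comm, jacobiMoment_mul_jacobiHalf_succ hα hβ, hshift, jacobiMoment,
    jacobiIntegral_C_mul, jacobiIntegral_sinHalfSq_mul _ hα hβ,
    jacobiIntegral_cosHalfSq_mul _ (by positivity) hβ]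
  ring

lemma exists_pos_jacobiHalf_zero_eq_C (hα : 0 ≤ α) (hβ : 0 ≤ β) :
    ∃ c : ℝ, 0 < c ∧ jacobiHalf 0 α β = C c :=
  ⟨_, jacobiCoeff_zero_pos 0 (by linarith) (by linarith), jacobiPoly_zero _ _⟩

lemma jacobiMoment_jacobiHalf_mul_eq_zero (hα : 0 ≤ α) (hβ : 0 ≤ β) (γ η : ℝ) {k N : ℕ}
    (h : N < k) : jacobiMoment α β (jacobiHalf k α β * jacobiHalf N γ η) = 0 := by
  induction k generalizing N α β γ η with
  | zero => exact absurd h N.not_lt_zero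
  | succ k ih =>
    rcases N with _ | N
    · rw [mul_comm, jacobiMoment_mul_jacobiHalf_succ hα hβ, jacobiHalf, jacobiPoly_zero]
      simp [jacobiMoment, jacobiIntegral]
    · rw [jacobiMoment_jacobiHalf_succ_mul_succ hα hβ,
        ih (by positivity) (by positivity) _ _ (Nat.succ_lt_succ_iff.1 h), mul_zero]

lemma jacobiMoment_jacobiHalf_mul_self_eq_zero (hα : 0 ≤ α) (hβ : 0 ≤ β) {k N : ℕ} (h : k ≠ N) :
    jacobiMoment α β (jacobiHalf k α β * jacobiHalf N α β) = 0 := by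
  rcases h.lt_or_gt with h | h
  · rw [mul_comm, jacobiMoment_jacobiHalf_mul_eq_zero hα hβ _ _ h]
  · exact jacobiMoment_jacobiHalf_mul_eq_zero hα hβ _ _ h

lemma jacobiMoment_jacobiHalf_mul_pos (hα : 0 ≤ α) (hβ : 0 ≤ β) (hγ : 0 ≤ γ) (hη : 0 ≤ η) (k : ℕ) :
    0 < jacobiMoment α β (jacobiHalf k α β * jacobiHalf k γ η) := by
  induction k generalizing α β γ η with
  | zero =>
    obtain ⟨c, hc, hc_eq⟩ := exists_pos_jacobiHalf_zero_eq_C hα hβ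
    obtain ⟨d, hd, hd_eq⟩ := exists_pos_jacobiHalf_zero_eq_C hγ hη
    rw [hc_eq, hd_eq, ← C_mul, ← mul_one (C _), jacobiMoment, jacobiIntegral_C_mul]
    exact mul_pos (mul_pos hc hd) (jacobiMoment_one_pos hα hβ)
  | succ k ih =>
    rw [jacobiMoment_jacobiHalf_succ_mul_succ hα hβ]
    exact mul_pos (by positivity)
      (ih (by positivity) (by positivity) (by positivity) (by positivity))

lemma jacobiMoment_jacobiHalf_mul_nonneg_of_forall_shift (hα : 0 ≤ α) (hβ : 0 ≤ β) (hγ : 0 ≤ γ)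
    (hη : 0 ≤ η)
    (h : ∀ j N : ℕ, 0 ≤ jacobiMoment (α + j) (β + j) (jacobiHalf N (γ + j) (η + j))) (k N : ℕ) :
    0 ≤ jacobiMoment α β (jacobiHalf k α β * jacobiHalf N γ η) := by
  induction k generalizing N α β γ η with
  | zero =>
    obtain ⟨c, hc, hc_eq⟩ := exists_pos_jacobiHalf_zero_eq_C hα hβ
    rw [hc_eq, jacobiMoment, jacobiIntegral_C_mul]
    exact mul_nonneg hc.le (by simpa using h 0 N)
  | succ k ih =>
    rcases N with _ | N
    · exact (jacobiMoment_jacobiHalf_mul_eq_zero hα hβ γ η k.succ_pos).ge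
    · rw [jacobiMoment_jacobiHalf_succ_mul_succ hα hβ]
      refine mul_nonneg (by positivity) (ih (by positivity) (by positivity) (by positivity)
        (by positivity) (fun j N => ?_) N)
      simpa [add_assoc, add_comm (1 : ℝ)] using h (j + 1) N

lemma jacobiMoment_nonneg {R : ℝ[X]} (hR : ∀ θ ∈ Ioo 0 π, 0 ≤ R.eval (cos θ)) :
    0 ≤ jacobiMoment α β R := by
  rw [jacobiMoment, jacobiIntegral, intervalIntegral.integral_of_le pi_pos.le,
    integral_Ioc_eq_integral_Ioo]
  refine setIntegral_nonneg measurableSet_Ioo fun θ hθ => ?_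
  simpa using mul_nonneg (jacobiWeight_pos hθ).le (hR θ hθ)

lemma jacobiMoment_cosHalfSq_pow_mul_jacobiHalf_nonneg (hα : 0 ≤ α) (hβ : 0 ≤ β) (hαγ : α ≤ γ)
    (j M : ℕ) : 0 ≤ jacobiMoment α β (𝔳 ^ j * jacobiHalf M (γ + j) (β + j)) := by
  induction M generalizing j with
  | zero =>
    obtain ⟨c, hc, hc_eq⟩ := exists_pos_jacobiHalf_zero_eq_C (α := γ + j) (β := β + j)
      (by linarith [j.cast_nonneg (α := ℝ)]) (by positivity)
    rw [hc_eq, mul_comm, jacobiMoment, jacobiIntegral_C_mul]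
    refine mul_nonneg hc.le (jacobiMoment_nonneg fun θ _ => ?_)
    rw [eval_pow, eval_cosHalfSq_cos]
    positivity
  | succ M ih =>
    have hpow : 𝔲 * 𝔳 * derivative (𝔳 ^ j) + C (1 / 2) *
        (C (γ + j - α) * 𝔳 - C (β + j - β) * 𝔲) * 𝔳 ^ j = C ((γ + j - α) / 2) * 𝔳 ^ (j + 1) := by
      have hD := cosHalfSq_mul_derivative_pow j
      rw [div_eq_mul_one_div, C_mul] at hD
      rw [add_sub_cancel_left, div_eq_mul_one_div (γ + j - α), C_mul]
      linear_combination 𝔲 * hD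
    have hj := ih (j + 1)
    push_cast [← add_assoc] at hj
    rw [jacobiMoment_mul_jacobiHalf_succ hα hβ, hpow, mul_assoc, jacobiMoment,
      jacobiIntegral_C_mul]
    have : 0 ≤ γ + j - α := by linarith [j.cast_nonneg (α := ℝ)]
    positivity

lemma jacobiMoment_X_pow_nonneg (α : ℝ) (i : ℕ) : 0 ≤ jacobiMoment α α (X ^ i) := by
  rcases i.even_or_odd with hi | hi
  · exact jacobiMoment_nonneg fun θ _ => by simpa using hi.pow_nonneg (cos θ)
  · have hrefl := intervalIntegral.integral_comp_sub_left (a := 0) (b := π)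
      (fun θ => jacobiWeight α α θ * cos θ ^ i) π
    have hodd : ∀ θ, jacobiWeight α α (π - θ) * cos (π - θ) ^ i =
        -(jacobiWeight α α θ * cos θ ^ i) := by
      intro θ
      rw [jacobiWeight, sub_div, sin_pi_div_two_sub, cos_pi_div_two_sub, cos_pi_sub, hi.neg_pow,
        jacobiWeight]
      ring
    simp only [hodd, sub_self, sub_zero, intervalIntegral.integral_neg] at hrefl
    simp only [jacobiMoment, jacobiIntegral, ContinuousMap.one_apply, one_mul, eval_pow, eval_X]
    linarith

lemma jacobiMoment_X_pow_mul_jacobiHalf_nonneg (hα : 0 ≤ α) (hαγ : α ≤ γ) {i : ℕ}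
    (hi : i ≤ 2 * (γ - α)) (M : ℕ) : 0 ≤ jacobiMoment α α (X ^ i * jacobiHalf M γ γ) := by
  induction M generalizing γ i with
  | zero =>
    obtain ⟨c, hc, hc_eq⟩ := exists_pos_jacobiHalf_zero_eq_C (hα.trans hαγ) (hα.trans hαγ)
    rw [hc_eq, mul_comm, jacobiMoment, jacobiIntegral_C_mul]
    exact mul_nonneg hc.le (jacobiMoment_X_pow_nonneg α i)
  | succ M ih =>
    have hpow : 𝔲 * 𝔳 * derivative (X ^ i) + C (1 / 2) *
        (C (γ - α) * 𝔳 - C (γ - α) * 𝔲) * X ^ i =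
        C (i / 4 : ℝ) * X ^ (i - 1) + C ((2 * (γ - α) - i) / 4) * X ^ (i + 1) := by
      refine Polynomial.funext fun x => ?_
      simp only [derivative_X_pow, sinHalfSq, cosHalfSq, eval_add, eval_sub, eval_mul, eval_pow,
        eval_C, eval_X, eval_one]
      rcases i with _ | i
      · push_cast
        ring
      · push_cast [Nat.add_sub_cancel]
        ring
    rw [jacobiMoment_mul_jacobiHalf_succ hα hα, hpow, add_mul, mul_assoc, mul_assoc, jacobiMoment,
      jacobiIntegral_add _ hα hα, jacobiIntegral_C_mul, jacobiIntegral_C_mul]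
    have hdown := ih (γ := γ + 1) (i := i - 1) (by linarith)
      (by linarith [Nat.cast_le (α := ℝ).2 (i.sub_le 1)])
    have hup := ih (γ := γ + 1) (i := i + 1) (by linarith) (by push_cast; linarith)
    have : 0 ≤ 2 * (γ - α) - i := by linarith
    positivity

lemma jacobiMoment_jacobiHalf_mul_nonneg_left (hα : 0 ≤ α) (hβ : 0 ≤ β) (hαγ : α ≤ γ) (k N : ℕ) :
    0 ≤ jacobiMoment α β (jacobiHalf k α β * jacobiHalf N γ β) := by
  refine jacobiMoment_jacobiHalf_mul_nonneg_of_forall_shift hα hβ (hα.trans hαγ) hβ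
    (fun j M => ?_) k N
  simpa using jacobiMoment_cosHalfSq_pow_mul_jacobiHalf_nonneg (α := α + j) (β := β + j)
    (γ := γ + j) (by positivity) (by positivity) (by linarith) 0 M

lemma jacobiMoment_jacobiHalf_mul_nonneg_diagonal (hα : 0 ≤ α) (hαγ : α ≤ γ) (k N : ℕ) :
    0 ≤ jacobiMoment α α (jacobiHalf k α α * jacobiHalf N γ γ) := by
  refine jacobiMoment_jacobiHalf_mul_nonneg_of_forall_shift hα hα (hα.trans hαγ) (hα.trans hαγ)
    (fun j M => ?_) k N
  simpa using jacobiMoment_X_pow_mul_jacobiHalf_nonneg (α := α + j) (γ := γ + j) (i := 0)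
    (by positivity) (by linarith) (by push_cast; linarith) M

end Connection

section OrthogonalExpansion

variable {ι E : Type*} [NormedAddCommGroup E] [InnerProductSpace ℝ E] [CompleteSpace E]

lemma hasSum_inner_mul_inner_of_mem_topologicalClosure_span {v : ι → E} (hv : Orthonormal ℝ v)
    {f : E} (hf : f ∈ (Submodule.span ℝ (range v)).topologicalClosure) (g : E) :
    HasSum (fun i => ⟪f, v i⟫_ℝ * ⟪v i, g⟫_ℝ) ⟪f, g⟫_ℝ := by
  classical
  have hrange := hv.orthogonalFamily.range_linearIsometry
  simp only [LinearIsometry.toSpanSingleton, LinearMap.range_toSpanSingleton,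
    ← Submodule.span_range_eq_iSup] at hrange
  obtain ⟨c, hc⟩ : ∃ c : ι → ℝ, HasSum (fun i => c i • v i) f := by
    obtain ⟨x, rfl⟩ := hrange ▸ hf
    exact ⟨x, hv.orthogonalFamily.hasSum_linearIsometry x⟩
  have hcoeff : ∀ i, ⟪v i, f⟫_ℝ = c i := fun i => by
    refine ((innerSL ℝ (v i)).hasSum hc).unique ?_
    convert hasSum_single i fun j hj => ?_ using 1
    · simp [hv.1 i]
    · simp [hv.2 hj.symm]
  have hg := (innerSL ℝ g).hasSum hc
  simp only [innerSL_apply_apply, inner_smul_right] at hg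
  rw [real_inner_comm]
  exact hg.congr_fun fun i => by rw [← hcoeff, real_inner_comm f, real_inner_comm g]

lemma inner_pos_of_mem_topologicalClosure_span {e : ι → E}
    (he : Pairwise fun i j => ⟪e i, e j⟫_ℝ = 0) {f g : E}
    (hf : f ∈ (Submodule.span ℝ (range e)).topologicalClosure) (hfe : ∀ i, 0 < ⟪f, e i⟫_ℝ)
    (heg : ∀ i, 0 ≤ ⟪e i, g⟫_ℝ) (hpos : ∃ i, 0 < ⟪e i, g⟫_ℝ) : 0 < ⟪f, g⟫_ℝ := by
  have hne : ∀ i, ‖e i‖ ≠ 0 := fun i h => by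
    simpa [norm_eq_zero.1 h] using hfe i
  have hv : Orthonormal ℝ fun i => ‖e i‖⁻¹ • e i := by
    refine ⟨fun i => by simp [norm_smul, hne], fun i j hij => ?_⟩
    simp only [inner_smul_left, inner_smul_right, he hij, mul_zero]
  have hspan : Submodule.span ℝ (range e) ≤ Submodule.span ℝ (range fun i => ‖e i‖⁻¹ • e i) := by
    refine Submodule.span_le.2 (range_subset_iff.2 fun i => ?_)
    rw [← smul_inv_smul₀ (hne i) (e i)]
    exact Submodule.smul_mem _ _ (Submodule.subset_span ⟨i, rfl⟩)
  have hsum := hasSum_inner_mul_inner_of_mem_topologicalClosure_span hv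
    (Submodule.topologicalClosure_mono hspan hf) g
  simp only [inner_smul_left, inner_smul_right, conj_trivial] at hsum
  obtain ⟨k, hk⟩ := hpos
  have hnorm : ∀ i, 0 < ‖e i‖⁻¹ := fun i => by have := hne i; positivity
  refine lt_of_lt_of_le ?_ (le_hasSum hsum k fun i _ => ?_)
  · exact mul_pos (mul_pos (hnorm k) (hfe k)) (mul_pos (hnorm k) hk)
  · exact mul_nonneg (mul_pos (hnorm i) (hfe i)).le (mul_nonneg (hnorm i).le (heg i))

end OrthogonalExpansion

section WeightedL2

/-- The substitution `R ↦ (θ ↦ R (cos θ))`, as an algebra homomorphism. -/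
noncomputable def evalCos : ℝ[X] →ₐ[ℝ] C(ℝ, ℝ) := aeval ⟨cos, continuous_cos⟩

@[simp]
lemma evalCos_apply (R : ℝ[X]) (θ : ℝ) : evalCos R θ = R.eval (cos θ) :=
  aeval_continuousMap_apply R _ θ

/-- The inclusion of `[0, π]` in `ℝ`. -/
def angleInclusion : C(Icc 0 π, ℝ) := ⟨Subtype.val, continuous_subtype_val⟩

lemma closure_range_evalCos_comp_angleInclusion (g : C(Icc 0 π, ℝ)) :
    g ∈ closure (range fun R : ℝ[X] => (evalCos R).comp angleInclusion) := by
  set A := ((ContinuousMap.compRightAlgHom ℝ ℝ angleInclusion).comp evalCos).range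
  have hsep : A.SeparatesPoints := fun x y hxy => by
    refine ⟨_, ⟨_, ⟨X, rfl⟩, rfl⟩, fun h => hxy (Subtype.ext (injOn_cos x.2 y.2 ?_))⟩
    simpa [angleInclusion] using h
  have hg : g ∈ A.topologicalClosure :=
    ContinuousMap.continuousMap_mem_subalgebra_closure_of_separatesPoints A hsep g
  exact hg

/-- Lebesgue measure on the subtype `[0, π]`. -/
noncomputable abbrev angleMeasure : Measure (Icc 0 π) := volume.comap Subtype.val

instance : IsFiniteMeasure angleMeasure :=
  ⟨by simpa only [(MeasurableEmbedding.subtype_coe measurableSet_Icc).comap_apply, image_univ,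
    Subtype.range_coe] using measure_Icc_lt_top⟩

/-- The class in `L²([0, π])` of the product `W * g`. -/
noncomputable def weightedToLp (W : C(ℝ, ℝ)) :
    C(ℝ, ℝ) →ₗ[ℝ] Lp ℝ 2 angleMeasure :=
  (ContinuousMap.toLp 2 angleMeasure ℝ).toLinearMap ∘ₗ
    (ContinuousMap.compRightAlgHom ℝ ℝ angleInclusion).toLinearMap ∘ₗ LinearMap.mulLeft ℝ W

lemma inner_weightedToLp (V W g h : C(ℝ, ℝ)) :
    ⟪weightedToLp V g, weightedToLp W h⟫_ℝ = ∫ θ in 0..π, V θ * W θ * (g θ * h θ) := by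
  have hinner : ⟪weightedToLp V g, weightedToLp W h⟫_ℝ = ∫ θ : Icc 0 π,
      (W * h).comp angleInclusion θ * (V * g).comp angleInclusion θ ∂angleMeasure :=
    ContinuousMap.inner_toLp angleMeasure ((V * g).comp angleInclusion)
      ((W * h).comp angleInclusion)
  rw [hinner, intervalIntegral.integral_of_le pi_pos.le, ← integral_Icc_eq_integral_Ioc,
    ← integral_subtype_comap measurableSet_Icc]
  refine integral_congr_ae (.of_forall fun θ => ?_)
  simp only [angleInclusion, ContinuousMap.comp_apply, ContinuousMap.coe_mk,
    ContinuousMap.mul_apply]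
  ring

lemma weightedToLp_mem_topologicalClosure_span (W g : C(ℝ, ℝ)) {P : ℕ → ℝ[X]}
    (hP : Submodule.span ℝ (range P) = ⊤) :
    weightedToLp W g ∈
      (Submodule.span ℝ (range fun n => weightedToLp W (evalCos (P n)))).topologicalClosure := by
  have hspan : ∀ R, weightedToLp W (evalCos R) ∈
      Submodule.span ℝ (range fun n => weightedToLp W (evalCos (P n))) := fun R => by
    have hR := Submodule.mem_map_of_mem (f := weightedToLp W ∘ₗ evalCos.toLinearMap)
      (hP ▸ Submodule.mem_top : R ∈ Submodule.span ℝ (range P))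
    rwa [Submodule.map_span, ← range_comp] at hR
  have hmul : Continuous fun φ : C(Icc 0 π, ℝ) =>
      ContinuousMap.toLp 2 angleMeasure ℝ (W.comp angleInclusion * φ) :=
    (ContinuousMap.toLp 2 angleMeasure ℝ).continuous.comp (continuous_const.mul continuous_id)
  refine map_mem_closure (s := range fun R => (evalCos R).comp angleInclusion) hmul
    (closure_range_evalCos_comp_angleInclusion (g.comp angleInclusion)) ?_
  rintro _ ⟨R, rfl⟩
  exact hspan R

end WeightedL2

section Transfer

variable {α β γ η : ℝ} {g : C(ℝ, ℝ)}

lemma inner_weightedToLp_jacobiWeight (hα : 0 ≤ α) (hβ : 0 ≤ β) (hγ : 0 ≤ γ) (hη : 0 ≤ η)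
    (g : C(ℝ, ℝ)) (R : ℝ[X]) :
    ⟪weightedToLp ⟨jacobiWeight α β, continuous_jacobiWeight hα hβ⟩ g,
      weightedToLp ⟨jacobiWeight γ η, continuous_jacobiWeight hγ hη⟩ (evalCos R)⟫_ℝ =
      jacobiIntegral g (α + γ) (β + η) R := by
  rw [inner_weightedToLp]
  refine intervalIntegral.integral_congr fun θ hθ => ?_
  rw [uIcc_of_le pi_pos.le] at hθ
  simp only [ContinuousMap.coe_mk, evalCos_apply, ← jacobiWeight_mul hα hβ hγ hη hθ]
  ring

lemma jacobiIntegral_evalCos (α β : ℝ) (Q R : ℝ[X]) :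
    jacobiIntegral (evalCos Q) α β R = jacobiMoment α β (Q * R) := by
  refine intervalIntegral.integral_congr fun θ _ => ?_
  simp only [evalCos_apply, ContinuousMap.one_apply, eval_mul]
  ring

/-- All Fourier-Jacobi coefficients of `g` with parameters `(α - 1/2, β - 1/2)` are positive. -/
def HasPosJacobiCoeffs (g : C(ℝ, ℝ)) (α β : ℝ) : Prop :=
  ∀ n, 0 < jacobiIntegral g α β (jacobiHalf n α β)

-- Parseval's identity for the weight `(γ, η)`: the coefficients of the second factor are the
-- connection coefficients from `(α, β)` to `(γ, η)`.
lemma HasPosJacobiCoeffs.of_jacobiMoment_nonneg (hg : HasPosJacobiCoeffs g γ η) (hα : 0 ≤ α)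
    (hβ : 0 ≤ β) (hγ : 0 ≤ γ) (hη : 0 ≤ η) (hγα : γ ≤ 2 * α) (hηβ : η ≤ 2 * β)
    (hconn : ∀ k N, 0 ≤ jacobiMoment α β (jacobiHalf k α β * jacobiHalf N γ η)) :
    HasPosJacobiCoeffs g α β := by
  intro k
  have hγ' : 0 ≤ γ / 2 := by linarith
  have hη' : 0 ≤ η / 2 := by linarith
  have hα' : 0 ≤ α - γ / 2 := by linarith
  have hβ' : 0 ≤ β - η / 2 := by linarith
  set W : C(ℝ, ℝ) := ⟨jacobiWeight (γ / 2) (η / 2), continuous_jacobiWeight hγ' hη'⟩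
  set V : C(ℝ, ℝ) := ⟨jacobiWeight (α - γ / 2) (β - η / 2), continuous_jacobiWeight hα' hβ'⟩
  have hWW : ∀ (φ : C(ℝ, ℝ)) (R : ℝ[X]), ⟪weightedToLp W φ, weightedToLp W (evalCos R)⟫_ℝ =
      jacobiIntegral φ γ η R := fun φ R => by
    rw [inner_weightedToLp_jacobiWeight hγ' hη' hγ' hη', add_halves, add_halves]
  have hWV : ∀ (φ : C(ℝ, ℝ)) (R : ℝ[X]), ⟪weightedToLp W φ, weightedToLp V (evalCos R)⟫_ℝ =
      jacobiIntegral φ α β R := fun φ R => by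
    rw [inner_weightedToLp_jacobiWeight hγ' hη' hα' hβ', add_sub_cancel, add_sub_cancel]
  rw [← hWV]
  refine inner_pos_of_mem_topologicalClosure_span
    (e := fun N => weightedToLp W (evalCos (jacobiHalf N γ η))) (fun i j (hij : i ≠ j) => ?_)
    (weightedToLp_mem_topologicalClosure_span W g
      (span_range_jacobiPoly (by linarith) (by linarith))) (fun N => ?_) (fun N => ?_) ⟨k, ?_⟩
  · dsimp only
    rw [hWW, jacobiIntegral_evalCos, jacobiMoment_jacobiHalf_mul_self_eq_zero hγ hη hij]
  · simpa only [hWW] using hg N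
  · rw [hWV, jacobiIntegral_evalCos, mul_comm]
    exact hconn k N
  · rw [hWV, jacobiIntegral_evalCos, mul_comm]
    exact jacobiMoment_jacobiHalf_mul_pos hα hβ hγ hη k

lemma HasPosJacobiCoeffs.add_one_right (hg : HasPosJacobiCoeffs g α β) (hα : 0 ≤ α)
    (hβ : 0 ≤ β) : HasPosJacobiCoeffs g α (β + 1) := by
  intro n
  have ha : 0 < n + (α - 1 / 2) + 1 := by linarith [n.cast_nonneg (α := ℝ)]
  have hb : 0 < n + (β - 1 / 2) + 1 := by linarith [n.cast_nonneg (α := ℝ)]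
  have hraise := congrArg (jacobiIntegral g α β) (jacobiPoly_raise_right ha.ne' hb.ne')
  rw [jacobiIntegral_C_mul, jacobiIntegral_add g hα hβ, jacobiIntegral_C_mul,
    jacobiIntegral_C_mul, jacobiIntegral_cosHalfSq_mul g hα hβ, ← jacobiHalf, ← jacobiHalf,
    ← add_sub_right_comm, ← jacobiHalf] at hraise
  have hn1 := hg (n + 1)
  have hn0 := hg n
  have hsum : 0 < 2 * n + (α - 1 / 2) + (β - 1 / 2) + 2 := by linarith
  refine pos_of_mul_pos_right (hraise.trans_gt ?_) hsum.le
  positivity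

lemma HasPosJacobiCoeffs.add_natCast_right (hg : HasPosJacobiCoeffs g α β) (hα : 0 ≤ α)
    (hβ : 0 ≤ β) (k : ℕ) : HasPosJacobiCoeffs g α (β + k) := by
  induction k with
  | zero => simpa using hg
  | succ k ih =>
    push_cast [← add_assoc]
    exact ih.add_one_right hα (by positivity)

lemma of_forall_le_two_mul {p : ℝ → Prop} {a b : ℝ} (ha : 0 < a) (hab : a ≤ b) (hb : p b)
    (step : ∀ x y, a ≤ x → x ≤ y → y ≤ 2 * x → p y → p x) : p a := by
  have hdesc : ∀ (j : ℕ) (x : ℝ), a ≤ x → x ≤ b → b ≤ 2 ^ j * x → p x := by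
    intro j
    induction j with
    | zero =>
      intro x _ hxb hbx
      rwa [hxb.antisymm (by simpa using hbx)]
    | succ j ih =>
      intro x hax hxb hbx
      have hx : x ≤ min (2 * x) b := le_min (by linarith) hxb
      refine step x (min (2 * x) b) hax hx (min_le_left _ _)
        (ih _ (hax.trans hx) (min_le_right _ _) ?_)
      rcases min_choice (2 * x) b with h | h
      · rwa [h, ← mul_assoc, ← pow_succ]
      · rw [h]
        exact le_mul_of_one_le_left (by linarith) (one_le_pow₀ one_le_two)
  obtain ⟨j, hj⟩ := pow_unbounded_of_one_lt (b / a) one_lt_two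
  exact hdesc j a le_rfl hab ((div_le_iff₀ ha).1 hj.le)

lemma HasPosJacobiCoeffs.lower_left (hg : HasPosJacobiCoeffs g γ β) (hα : 0 < α) (hβ : 0 ≤ β)
    (hαγ : α ≤ γ) : HasPosJacobiCoeffs g α β :=
  of_forall_le_two_mul (p := fun x => HasPosJacobiCoeffs g x β) hα hαγ hg
    fun x y hαx hxy hyx hy => hy.of_jacobiMoment_nonneg (by linarith) hβ (by linarith) hβ hyx
      (by linarith) (jacobiMoment_jacobiHalf_mul_nonneg_left (by linarith) hβ hxy)

lemma HasPosJacobiCoeffs.lower_diagonal (hg : HasPosJacobiCoeffs g γ γ) (hα : 0 < α)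
    (hαγ : α ≤ γ) : HasPosJacobiCoeffs g α α :=
  of_forall_le_two_mul (p := fun x => HasPosJacobiCoeffs g x x) hα hαγ hg
    fun x y hαx hxy hyx hy => hy.of_jacobiMoment_nonneg (by linarith) (by linarith)
      (by linarith) (by linarith) hyx hyx
      (jacobiMoment_jacobiHalf_mul_nonneg_diagonal (by linarith) hxy)

lemma HasPosJacobiCoeffs.of_natCast_left {m k : ℕ} (hg : HasPosJacobiCoeffs g m 0) (hα : 0 < α)
    (hαm : α ≤ m) (hβ : β = k ∨ β ∈ Icc (α + k) (m + k)) : HasPosJacobiCoeffs g α β := by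
  rcases hβ with rfl | ⟨hαβ, hβm⟩
  · simpa using (hg.lower_left hα le_rfl hαm).add_natCast_right hα.le le_rfl k
  · have hm : HasPosJacobiCoeffs g m m := by
      simpa using hg.add_natCast_right m.cast_nonneg le_rfl m
    have hdiag : HasPosJacobiCoeffs g (β - k) (β - k) :=
      hm.lower_diagonal (by linarith) (by linarith)
    simpa using (hdiag.lower_left hα (by linarith) (by linarith)).add_natCast_right hα.le
      (by linarith) k

end Transfer

section TruncatedPower

variable {δ : ℝ}

/-- The truncated power `θ ↦ (t - θ)₊ ^ δ`. -/
noncomputable def truncatedPower (hδ : 0 ≤ δ) (t : ℝ) : C(ℝ, ℝ) :=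
  ⟨fun θ => max (t - θ) 0 ^ δ, by fun_prop (disch := positivity)⟩

lemma FJ_eq_jacobiIntegral_truncatedPower {α β t : ℝ} (hα : 0 ≤ α) (hβ : 0 ≤ β) (hδ : 0 < δ)
    (ht : t ∈ Icc 0 π) (n : ℕ) :
    FJ n α β δ t = jacobiIntegral (truncatedPower hδ.le t) α β (jacobiHalf n α β) := by
  have hint : ∀ a b, IntervalIntegrable (fun θ => truncatedPower hδ.le t θ *
      (jacobiWeight α β θ * (jacobiHalf n α β).eval (cos θ))) volume a b :=
    ((truncatedPower hδ.le t).continuous.mul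
      (continuous_jacobiWeight_mul_eval_cos hα hβ _)).intervalIntegrable
  rw [jacobiIntegral, ← intervalIntegral.integral_add_adjacent_intervals (hint 0 t) (hint t π),
    intervalIntegral.integral_congr (a := t) (b := π) (g := fun _ => 0) fun θ hθ => ?_]
  · rw [intervalIntegral.integral_zero, add_zero, FJ]
    refine intervalIntegral.integral_congr fun θ hθ => ?_
    rw [uIcc_of_le ht.1] at hθ
    simp only [truncatedPower, jacobiWeight, jacobiHalf, eval_jacobiPoly, ContinuousMap.coe_mk,
      max_eq_left (sub_nonneg.2 hθ.2)]
    ring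
  · rw [uIcc_of_le ht.2] at hθ
    simp [truncatedPower, max_eq_right (sub_nonpos.2 hθ.1), hδ.ne']

end TruncatedPower

section Primitive

/-- The primitive `t ↦ ∫ s in 0..t, φ s` as a linear operator, so that its powers are the repeated
integrals from `0`. -/
noncomputable def primitive : Module.End ℝ C(ℝ, ℝ) where
  toFun φ := ⟨fun t => ∫ s in 0..t, φ s,
    intervalIntegral.continuous_primitive (fun _ _ => φ.continuous.intervalIntegrable _ _) 0⟩
  map_add' φ ψ := ContinuousMap.ext fun _ => intervalIntegral.integral_add
    (φ.continuous.intervalIntegrable _ _) (ψ.continuous.intervalIntegrable _ _)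
  map_smul' c φ := ContinuousMap.ext fun _ => intervalIntegral.integral_const_mul c φ

lemma primitive_apply (φ : C(ℝ, ℝ)) (t : ℝ) : primitive φ t = ∫ s in 0..t, φ s := rfl

lemma primitive_apply_zero (φ : C(ℝ, ℝ)) : primitive φ 0 = 0 :=
  intervalIntegral.integral_same

lemma hasDerivAt_primitive (φ : C(ℝ, ℝ)) (t : ℝ) : HasDerivAt (primitive φ) (φ t) t :=
  intervalIntegral.integral_hasDerivAt_right (φ.continuous.intervalIntegrable _ _)
    (φ.continuous.stronglyMeasurableAtFilter _ _) φ.continuous.continuousAt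

lemma primitive_eq_sub {φ ψ : C(ℝ, ℝ)} (h : ∀ t, HasDerivAt φ (ψ t) t) (t : ℝ) :
    primitive ψ t = φ t - φ 0 :=
  intervalIntegral.integral_eq_sub_of_hasDerivAt (fun x _ => h x)
    (ψ.continuous.intervalIntegrable _ _)

variable {p t : ℝ}

lemma intervalIntegrable_sub_rpow_mul (hp : -1 < p) (φ : C(ℝ, ℝ)) :
    IntervalIntegrable (fun θ => (t - θ) ^ p * φ θ) volume 0 t := by
  refine IntervalIntegrable.mul_continuousOn ?_ φ.continuous.continuousOn
  have h := intervalIntegral.intervalIntegrable_rpow' (a := 0) (b := t) hp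
  simpa using (h.comp_sub_left t).symm

lemma integral_sub_rpow_add_one_mul (hp : -1 < p) (ht : 0 ≤ t) (φ : C(ℝ, ℝ)) :
    ∫ θ in 0..t, (t - θ) ^ (p + 1) * φ θ =
      (p + 1) * ∫ θ in 0..t, (t - θ) ^ p * primitive φ θ := by
  have hcont : Continuous fun θ : ℝ => (t - θ) ^ (p + 1) :=
    (continuous_const.sub continuous_id).rpow_const fun _ => .inr (by linarith)
  have hderiv : ∀ θ ∈ Ioo (min 0 t) (max 0 t), HasDerivWithinAt (fun θ : ℝ => (t - θ) ^ (p + 1))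
      (-(p + 1) * (t - θ) ^ p) (Ioi θ) θ := by
    intro θ hθ
    rw [min_eq_left ht, max_eq_right ht] at hθ
    refine ((((hasDerivAt_id θ).const_sub t).rpow_const (p := p + 1)
      (.inl (sub_pos.2 hθ.2).ne')).congr_deriv ?_).hasDerivWithinAt
    rw [add_sub_cancel_right, id]
    ring
  have hint : IntervalIntegrable (fun θ => (t - θ) ^ p) volume 0 t := by
    simpa using intervalIntegrable_sub_rpow_mul hp 1
  rw [intervalIntegral.integral_mul_deriv_eq_deriv_mul_of_hasDeriv_right hcont.continuousOn
    (primitive φ).continuous.continuousOn hderiv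
    (fun θ _ => (hasDerivAt_primitive φ θ).hasDerivWithinAt) (hint.const_mul _)
    (φ.continuous.intervalIntegrable _ _), sub_self, zero_rpow (by linarith), primitive_apply_zero,
    zero_mul, mul_zero, sub_zero, zero_sub, ← intervalIntegral.integral_neg,
    ← intervalIntegral.integral_const_mul]
  simp only [neg_mul, neg_neg, mul_assoc]

lemma integral_sub_rpow_add_natCast_mul_pos (hp : -1 < p) (ht : 0 ≤ t) :
    ∀ (k : ℕ) (φ : C(ℝ, ℝ)), 0 < ∫ θ in 0..t, (t - θ) ^ p * (primitive ^ k) φ θ →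
      0 < ∫ θ in 0..t, (t - θ) ^ (p + k) * φ θ
  | 0, φ, h => by simpa using h
  | k + 1, φ, h => by
    have hpk : 0 < p + k + 1 := by linarith [k.cast_nonneg (α := ℝ)]
    rw [Nat.cast_succ, ← add_assoc, integral_sub_rpow_add_one_mul (by linarith) ht]
    exact mul_pos hpk (integral_sub_rpow_add_natCast_mul_pos hp ht k _ (by rwa [pow_succ] at h))

lemma integral_sub_rpow_mul_pos {k : ℕ} {φ : C(ℝ, ℝ)}
    (hφ : ∀ t, 0 < t → 0 < (primitive ^ (k + 1)) φ t) (hp : k ≤ p) (ht : 0 < t) :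
    0 < ∫ θ in 0..t, (t - θ) ^ p * φ θ := by
  rcases hp.eq_or_lt with rfl | hp
  · have h := integral_sub_rpow_add_natCast_mul_pos (p := 0) (by norm_num) ht.le k φ
    simp only [rpow_zero, one_mul, zero_add, ← primitive_apply] at h
    exact h (by simpa only [pow_succ'] using! hφ t ht)
  · have hp' : -1 < p - (k + 1 : ℕ) := by push_cast; linarith
    have h := integral_sub_rpow_add_natCast_mul_pos hp' ht.le (k + 1) φ
    rw [sub_add_cancel] at h
    exact h (intervalIntegral.intervalIntegral_pos_of_pos_on
      (intervalIntegrable_sub_rpow_mul hp' _)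
      (fun θ hθ => mul_pos (rpow_pos_of_pos (sub_pos.2 hθ.2) _) (hφ θ hθ.1)) ht)

end Primitive

section OscillatorKernel

/-- The solution `(1 - cos (ω x)) / ω ^ 2` of `K'' = 1 - ω ^ 2 K`, `K 0 = K' 0 = 0`, written so as
to include its limit `x ^ 2 / 2` at `ω = 0`. -/
noncomputable def oscKernel (ω x : ℝ) : ℝ :=
  x ^ 2 / 2 * sinc (ω * x / 2) ^ 2

/-- The derivative `sin (ω x) / ω` of `oscKernel ω`. -/
noncomputable def oscKernelDeriv (ω x : ℝ) : ℝ :=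
  x * sinc (ω * x)

lemma mul_sinc (x : ℝ) : x * sinc x = sin x := by
  rcases eq_or_ne x 0 with rfl | h
  · simp
  · rw [sinc_of_ne_zero h, mul_div_cancel₀ _ h]

variable (ω : ℝ)

lemma sq_mul_oscKernel (x : ℝ) : ω ^ 2 * oscKernel ω x = 1 - cos (ω * x) := by
  have hcos : cos (ω * x) = 1 - 2 * sin (ω * x / 2) ^ 2 := by
    rw [← cos_two_mul_eq_one_sub]
    ring_nf
  rw [hcos, ← mul_sinc, oscKernel]
  ring

lemma mul_oscKernelDeriv (x : ℝ) : ω * oscKernelDeriv ω x = sin (ω * x) := by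
  rw [oscKernelDeriv, ← mul_assoc, mul_sinc]

lemma hasDerivAt_oscKernel (x : ℝ) : HasDerivAt (oscKernel ω) (oscKernelDeriv ω x) x := by
  have hmul : HasDerivAt (fun x => ω * x) ω x := by simpa using (hasDerivAt_id x).const_mul ω
  rcases eq_or_ne ω 0 with rfl | hω
  · have h : oscKernel 0 = fun x => x ^ 2 / 2 := by ext x; simp [oscKernel]
    rw [h]
    exact ((hasDerivAt_pow 2 x).div_const 2).congr_deriv (by simp [oscKernelDeriv])
  · have h : oscKernel ω = fun x => (1 - cos (ω * x)) / ω ^ 2 := by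
      ext x
      rw [← sq_mul_oscKernel, mul_div_cancel_left₀ _ (pow_ne_zero 2 hω)]
    rw [h]
    refine ((hmul.cos.const_sub 1).div_const _).congr_deriv ?_
    rw [← mul_oscKernelDeriv]
    field_simp

lemma hasDerivAt_oscKernelDeriv (x : ℝ) :
    HasDerivAt (oscKernelDeriv ω) (1 - ω ^ 2 * oscKernel ω x) x := by
  have hmul : HasDerivAt (fun x => ω * x) ω x := by simpa using (hasDerivAt_id x).const_mul ω
  rw [sq_mul_oscKernel, sub_sub_cancel]
  rcases eq_or_ne ω 0 with rfl | hω
  · have h : oscKernelDeriv 0 = id := by ext x; simp [oscKernelDeriv]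
    rw [h]
    exact (hasDerivAt_id x).congr_deriv (by simp)
  · have h : oscKernelDeriv ω = fun x => sin (ω * x) / ω := by
      ext x
      rw [← mul_oscKernelDeriv, mul_div_cancel_left₀ _ hω]
    rw [h]
    exact (hmul.sin.div_const _).congr_deriv (mul_div_cancel_right₀ _ hω)

lemma continuous_oscKernel : Continuous (oscKernel ω) :=
  continuous_iff_continuousAt.2 fun x => (hasDerivAt_oscKernel ω x).continuousAt

lemma oscKernel_nonneg (x : ℝ) : 0 ≤ oscKernel ω x := by
  unfold oscKernel
  positivity

lemma exists_oscKernel_pos {a b : ℝ} (hab : a < b) : ∃ x ∈ Ioo a b, 0 < oscKernel ω x := by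
  by_contra! h
  have hzero : ∀ x ∈ Ioo a b, oscKernel ω x = 0 := fun x hx =>
    (h x hx).antisymm (oscKernel_nonneg ω x)
  have hzero' : ∀ x ∈ Ioo a b, oscKernelDeriv ω x = 0 := fun x hx =>
    (hasDerivAt_oscKernel ω x).unique ((hasDerivAt_const x 0).congr_of_eventuallyEq
      (Filter.eventually_of_mem (Ioo_mem_nhds hx.1 hx.2) hzero))
  obtain ⟨x, hx⟩ := exists_between hab
  have hone := (hasDerivAt_oscKernelDeriv ω x).unique ((hasDerivAt_const x 0).congr_of_eventuallyEq
    (Filter.eventually_of_mem (Ioo_mem_nhds hx.1 hx.2) hzero'))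
  rw [hzero x hx] at hone
  norm_num at hone

lemma eq_oscKernel_add_integral {c : ℝ} {z r : C(ℝ, ℝ)}
    (hz : z = primitive (primitive (c • 1 + primitive r - ω ^ 2 • z))) (t : ℝ) :
    z t = c * oscKernel ω t + ∫ s in 0..t, r s * oscKernel ω (t - s) := by
  set R := c • 1 + primitive r with hR
  set z' := primitive (R - ω ^ 2 • z)
  have hz₀ : z 0 = 0 := by rw [hz, primitive_apply_zero]
  have hz'₀ : z' 0 = 0 := primitive_apply_zero _
  have hR₀ : R 0 = c := by simp [hR, primitive_apply_zero]
  have hdz : ∀ s, HasDerivAt z (z' s) s := fun s => by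
    conv => enter [1]; rw [hz]
    exact hasDerivAt_primitive z' s
  have hdz' : ∀ s, HasDerivAt z' (R s - ω ^ 2 * z s) s := hasDerivAt_primitive _
  have hdR : ∀ s, HasDerivAt R (r s) s := fun s =>
    ((hasDerivAt_primitive r s).const_add (c • 1)).congr_deriv rfl
  have hd : ∀ s, HasDerivAt (fun s => z' s * oscKernelDeriv ω (t - s) +
      z s * (1 - ω ^ 2 * oscKernel ω (t - s)) + R s * oscKernel ω (t - s))
      (r s * oscKernel ω (t - s)) s := by
    intro s
    have hsub : HasDerivAt (fun s => t - s) (-1) s := (hasDerivAt_id s).const_sub t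
    have hK := (hasDerivAt_oscKernel ω (t - s)).comp s hsub
    have hK' := (hasDerivAt_oscKernelDeriv ω (t - s)).comp s hsub
    refine ((((hdz' s).mul hK').add ((hdz s).mul ((hK.const_mul (ω ^ 2)).const_sub 1))).add
      ((hdR s).mul hK)).congr_deriv ?_
    simp only [Function.comp_apply]
    ring
  have hint := intervalIntegral.integral_eq_sub_of_hasDerivAt (a := 0) (b := t) (fun s _ => hd s)
    ((r.continuous.mul ((continuous_oscKernel ω).comp
      (continuous_const.sub continuous_id))).intervalIntegrable _ _)
  rw [hint, hz₀, hz'₀, hR₀, sub_self]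
  simp [oscKernel, oscKernelDeriv]

lemma integral_mul_oscKernel_pos {f : C(ℝ, ℝ)} (hf : ∀ s, 0 < s → 0 ≤ f s)
    (hf_pos : ∀ a b, 0 ≤ a → a < b → ∃ s ∈ Ioo a b, 0 < f s) {t : ℝ} (ht : 0 < t) :
    0 < ∫ s in 0..t, f s * oscKernel ω (t - s) := by
  obtain ⟨s, hs, hfs⟩ := hf_pos 0 t le_rfl ht
  obtain ⟨a, b, hsab, hab⟩ := mem_nhds_iff_exists_Ioo_subset.1
    (Filter.inter_mem (Ioo_mem_nhds hs.1 hs.2) (f.continuous.continuousAt.eventually_const_lt hfs))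
  obtain ⟨x, hx, hKx⟩ := exists_oscKernel_pos ω (sub_lt_sub_left (hsab.1.trans hsab.2) t)
  obtain ⟨hmem, hfx⟩ := hab (a := t - x) ⟨by linarith [hx.2], by linarith [hx.1]⟩
  refine intervalIntegral.integral_pos ht (f.continuous.mul ((continuous_oscKernel ω).comp
    (continuous_const.sub continuous_id))).continuousOn
    (fun s hs => mul_nonneg (hf s hs.1) (oscKernel_nonneg ω _))
    ⟨t - x, Ioo_subset_Icc_self hmem, ?_⟩
  rw [sub_sub_cancel]
  exact mul_pos hfx hKx

end OscillatorKernel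

section BaseCase

/-- The Chebyshev operator `R ↦ (1 - X ^ 2) R'' - X R'`, which is `d² / dθ²` in the variable
`X = cos θ`. -/
noncomputable def chebyshevOp (R : ℝ[X]) : ℝ[X] :=
  (1 - X ^ 2) * derivative (derivative R) - X * derivative R

lemma hasDerivAt_evalCos (R : ℝ[X]) (θ : ℝ) :
    HasDerivAt (evalCos R) (-sin θ * evalCos (derivative R) θ) θ := by
  rw [evalCos_apply, mul_comm, show ⇑(evalCos R) = fun θ => R.eval (cos θ) by ext; simp]
  exact (R.hasDerivAt (cos θ)).comp θ (hasDerivAt_cos θ)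

lemma primitive_primitive_evalCos_chebyshevOp (R : ℝ[X]) :
    primitive (primitive (evalCos (chebyshevOp R))) = evalCos R - R.eval 1 • 1 := by
  let R' : C(ℝ, ℝ) := ⟨fun θ => -sin θ * evalCos (derivative R) θ, by fun_prop⟩
  have hR' : primitive (evalCos (chebyshevOp R)) = R' := by
    ext t
    rw [primitive_eq_sub (φ := R') fun θ => ?_]
    · simp [R']
    · refine ((hasDerivAt_sin θ).neg.mul (hasDerivAt_evalCos (derivative R) θ)).congr_deriv ?_
      simp only [chebyshevOp, evalCos_apply, eval_sub, eval_mul, eval_one, eval_pow, eval_X,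
        ← sin_sq, Pi.neg_apply]
      ring
  ext t
  rw [hR', primitive_eq_sub (φ := evalCos R) (ψ := R') (hasDerivAt_evalCos R)]
  simp

/-- The polynomial whose value at `cos θ` is `sin (θ / 2) ^ (2 m) * P_n^{(m - 1/2, -1/2)} (cos θ)`,
i.e. the integrand of `FJ n m 0` without its power of `t - θ`. -/
noncomputable def sinWeightedJacobi (n m : ℕ) : ℝ[X] := 𝔲 ^ m * jacobiHalf n m 0

lemma chebyshevOp_eq (R : ℝ[X]) :
    chebyshevOp R = 4 * 𝔲 * 𝔳 * derivative (derivative R) - (𝔳 - 𝔲) * derivative R := by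
  rw [chebyshevOp]
  refine Polynomial.funext fun x => ?_
  simp only [sinHalfSq, cosHalfSq, eval_sub, eval_add, eval_mul, eval_pow, eval_one, eval_ofNat,
    eval_X, eval_C]
  ring

lemma chebyshevOp_sinWeightedJacobi_zero (n : ℕ) :
    chebyshevOp (sinWeightedJacobi n 0) = -(n : ℝ) ^ 2 • sinWeightedJacobi n 0 := by
  have hode := jacobiPoly_ode n (0 - 1 / 2) (0 - 1 / 2)
  rw [chebyshevOp_eq, sinWeightedJacobi, pow_zero, one_mul, Nat.cast_zero, jacobiHalf]
  refine Polynomial.funext fun x => ?_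
  apply_fun eval x at hode
  simp only [eval_add, eval_sub, eval_mul, eval_ofNat, eval_C, eval_zero, eval_smul,
    smul_eq_mul] at hode ⊢
  linear_combination hode

lemma chebyshevOp_sinWeightedJacobi_succ (n m : ℕ) :
    chebyshevOp (sinWeightedJacobi n (m + 1)) =
      ((m + 1) * (n + m + 1 / 2) : ℝ) • sinWeightedJacobi n m -
        (n + m + 1 : ℝ) ^ 2 • sinWeightedJacobi n (m + 1) := by
  have hode := jacobiPoly_ode n (m - 1 / 2 + 1) (0 - 1 / 2)
  have hlower := jacobiPoly_lower_left (n := n) (a := m - 1 / 2) (0 - 1 / 2)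
    (by linarith [n.cast_nonneg (α := ℝ), m.cast_nonneg (α := ℝ)])
  have hpow_succ : derivative (𝔲 ^ (m + 1)) = C (-((m + 1) / 2) : ℝ) * 𝔲 ^ m := by
    rw [derivative_pow_succ, derivative_sinHalfSq, mul_right_comm, ← C_mul]
    ring_nf
  have hpow := sinHalfSq_mul_derivative_pow m
  have hsum := sinHalfSq_add_cosHalfSq
  rw [chebyshevOp_eq]
  simp only [sinWeightedJacobi, jacobiHalf, Nat.cast_succ, add_sub_right_comm (m : ℝ) 1,
    derivative_mul, derivative_add, derivative_C, hpow_succ]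
  generalize jacobiPoly n (m - 1 / 2 + 1) (0 - 1 / 2) = P at *
  refine Polynomial.funext fun x => ?_
  apply_fun eval x at hode hlower hpow hsum
  simp only [eval_add, eval_sub, eval_mul, eval_pow, eval_ofNat, eval_C, eval_zero, eval_one,
    eval_smul, smul_eq_mul] at hode hlower hpow hsum ⊢
  linear_combination eval x 𝔲 ^ (m + 1) * hode + (m + 1) * eval x 𝔲 ^ m * hlower -
    2 * (m + 1) * eval x 𝔳 * eval x P * hpow +
    (m + 1) * (m + 1 / 2) * eval x 𝔲 ^ m * eval x P * hsum

lemma eval_one_sinWeightedJacobi_zero_pos (n : ℕ) : 0 < (sinWeightedJacobi n 0).eval 1 := by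
  rw [sinWeightedJacobi, pow_zero, one_mul, jacobiHalf, eval_one_jacobiPoly]
  exact jacobiCoeff_zero_pos n (by norm_num) (by norm_num)

lemma eval_one_sinWeightedJacobi_succ (n m : ℕ) : (sinWeightedJacobi n (m + 1)).eval 1 = 0 := by
  simp [sinWeightedJacobi, sinHalfSq]

/-- The `(m + 2)`-fold integral from `0` of the function attached to `sinWeightedJacobi n m`. Up to
a positive factor it is `FJ n m 0 (m + 1)`. -/
noncomputable def iteratedJacobiIntegral (n m : ℕ) : C(ℝ, ℝ) :=
  (primitive ^ (m + 2)) (evalCos (sinWeightedJacobi n m))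

lemma iteratedJacobiIntegral_zero (n : ℕ) (t : ℝ) :
    iteratedJacobiIntegral n 0 t = (sinWeightedJacobi n 0).eval 1 * oscKernel n t := by
  have h := primitive_primitive_evalCos_chebyshevOp (sinWeightedJacobi n 0)
  rw [chebyshevOp_sinWeightedJacobi_zero, map_smul, map_smul, map_smul] at h
  have hz : iteratedJacobiIntegral n 0 = primitive (primitive
      ((sinWeightedJacobi n 0).eval 1 • 1 + primitive 0 -
        (n : ℝ) ^ 2 • iteratedJacobiIntegral n 0)) := by
    change primitive (primitive (evalCos (sinWeightedJacobi n 0))) = primitive (primitive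
      (_ + _ - _ • primitive (primitive (evalCos (sinWeightedJacobi n 0)))))
    congr 2
    rw [neg_smul] at h
    rw [map_zero, add_zero, sub_eq_add_neg, h, add_sub_cancel]
  simpa using eq_oscKernel_add_integral n hz t

lemma iteratedJacobiIntegral_succ (n m : ℕ) (t : ℝ) :
    iteratedJacobiIntegral n (m + 1) t = (m + 1) * (n + m + 1 / 2) *
      ∫ s in 0..t, iteratedJacobiIntegral n m s * oscKernel (n + m + 1) (t - s) := by
  have h := primitive_primitive_evalCos_chebyshevOp (sinWeightedJacobi n (m + 1))
  rw [eval_one_sinWeightedJacobi_succ, zero_smul, sub_zero, chebyshevOp_sinWeightedJacobi_succ,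
    map_sub, map_smul, map_smul] at h
  have hz : iteratedJacobiIntegral n (m + 1) = primitive (primitive ((0 : ℝ) • 1 +
      primitive (((m + 1) * (n + m + 1 / 2) : ℝ) • iteratedJacobiIntegral n m) -
        (n + m + 1 : ℝ) ^ 2 • iteratedJacobiIntegral n (m + 1))) := by
    have hcomm : ∀ φ, (primitive ^ (m + 3)) (primitive (primitive φ)) =
        primitive (primitive ((primitive ^ (m + 3)) φ)) :=
      LinearMap.congr_fun (pow_mul_comm primitive (m + 3) 2)
    have hsucc : (primitive ^ (m + 3)) (evalCos (sinWeightedJacobi n m)) =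
        primitive (iteratedJacobiIntegral n m) :=
      LinearMap.congr_fun (pow_succ' primitive (m + 2)) _
    apply_fun (primitive ^ (m + 3) : Module.End ℝ C(ℝ, ℝ)) at h
    rw [hcomm, map_sub, map_smul, map_smul, hsucc] at h
    rw [zero_smul, zero_add, map_smul]
    exact h.symm
  rw [eq_oscKernel_add_integral _ hz, zero_mul, zero_add, ← intervalIntegral.integral_const_mul]
  simp only [ContinuousMap.smul_apply, smul_eq_mul, mul_assoc]

lemma iteratedJacobiIntegral_succ_pos (n : ℕ) :
    ∀ (m : ℕ) {t : ℝ}, 0 < t → 0 < iteratedJacobiIntegral n (m + 1) t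
  | 0, t, ht => by
    have hc := eval_one_sinWeightedJacobi_zero_pos n
    rw [iteratedJacobiIntegral_succ]
    refine mul_pos (by positivity) (integral_mul_oscKernel_pos _ (fun s _ => ?_)
      (fun a b _ hab => ?_) ht)
    · rw [iteratedJacobiIntegral_zero]
      exact mul_nonneg hc.le (oscKernel_nonneg _ s)
    · obtain ⟨s, hs, hK⟩ := exists_oscKernel_pos n hab
      exact ⟨s, hs, by rw [iteratedJacobiIntegral_zero]; exact mul_pos hc hK⟩
  | m + 1, t, ht => by
    have ih := fun s hs => iteratedJacobiIntegral_succ_pos n m (t := s) hs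
    rw [iteratedJacobiIntegral_succ]
    refine mul_pos (by positivity) (integral_mul_oscKernel_pos _ (fun s hs => (ih s hs).le)
      (fun a b ha hab => ?_) ht)
    obtain ⟨s, hs⟩ := exists_between hab
    exact ⟨s, hs, ih s (ha.trans_lt hs.1)⟩

lemma FJ_natCast_zero (n m : ℕ) (δ t : ℝ) :
    FJ n m 0 δ t = ∫ θ in 0..t, (t - θ) ^ δ * evalCos (sinWeightedJacobi n m) θ := by
  refine intervalIntegral.integral_congr fun θ _ => ?_
  have hsin : sin (θ / 2) ^ (2 * m : ℝ) = (sin (θ / 2) ^ 2) ^ m := by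
    rw [← pow_mul, ← rpow_natCast]
    push_cast
    rfl
  simp only [sinWeightedJacobi, jacobiHalf, evalCos_apply, eval_mul, eval_pow,
    eval_sinHalfSq_cos, eval_jacobiPoly, hsin, mul_zero, rpow_zero]
  ring

lemma FJ_natCast_zero_pos {m : ℕ} {δ t : ℝ} (hm : m ≠ 0) (hδ : m + 1 ≤ δ) (ht : 0 < t) (n : ℕ) :
    0 < FJ n m 0 δ t := by
  obtain ⟨m, rfl⟩ := Nat.exists_eq_succ_of_ne_zero hm
  rw [FJ_natCast_zero]
  exact integral_sub_rpow_mul_pos (k := m + 2)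
    (fun s hs => iteratedJacobiIntegral_succ_pos n m hs) (by push_cast at hδ ⊢; linarith) ht

end BaseCase

theorem FJ_pos_noninteger_alpha_general {α β δ t : ℝ} {m : ℕ} (hα : 0 < α) (hαm : α ≤ m)
    (hδ : m + 1 ≤ δ) (hβ : ∃ k : ℕ, β = k ∨ β ∈ Icc (α + k) (m + k)) (ht : t ∈ Ioc 0 π) (n : ℕ) :
    0 < FJ n α β δ t := by
  obtain ⟨k, hβ⟩ := hβ
  have hk : (0 : ℝ) ≤ k := k.cast_nonneg
  have hm : (0 : ℝ) < m := hα.trans_le hαm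
  have hβ₀ : 0 ≤ β := by rcases hβ with rfl | h <;> [exact hk; linarith [h.1]]
  have hδ₀ : 0 < δ := by linarith
  have ht' := Ioc_subset_Icc_self ht
  have hbase : HasPosJacobiCoeffs (truncatedPower hδ₀.le t) m 0 := fun n => by
    rw [← FJ_eq_jacobiIntegral_truncatedPower hm.le le_rfl hδ₀ ht']
    exact FJ_natCast_zero_pos (Nat.cast_ne_zero.1 hm.ne') hδ ht.1 n
  rw [FJ_eq_jacobiIntegral_truncatedPower hα.le hβ₀ hδ₀ ht']
  exact hbase.of_natCast_left hα hαm hβ n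

theorem FJ_pos_noninteger_alpha (α β : ℝ) (hα : 0 < α)
    (hαnotint : ∀ k : ℤ, α ≠ (k : ℝ)) (hβ : 0 ≤ β) (δ : ℝ)
    (hδ : ((⌈α⌉ : ℤ) : ℝ) + 1 ≤ δ)
    (hcase : (∃ k : ℕ, β = (k : ℝ)) ∨ α = β ∨ (((⌊β⌋ : ℤ) : ℝ) < α ∧ α ≤ β)) :
    ∀ t ∈ Set.Ioc (0:ℝ) π, ∀ n : ℕ, 0 < FJ n α β δ t := by
  intro t ht n
  have hceil : ((⌈α⌉₊ : ℕ) : ℝ) = ⌈α⌉ := natCast_ceil_eq_intCast_ceil hα.le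
  refine FJ_pos_noninteger_alpha_general hα (Nat.le_ceil α) (by rwa [hceil]) ?_ ht n
  rcases hcase with ⟨k, rfl⟩ | rfl | ⟨hβα, hαβ⟩
  · exact ⟨k, .inl rfl⟩
  · exact ⟨0, .inr (by simp [Nat.le_ceil])⟩
  · have hlt : (⌊β⌋ : ℝ) < ⌈α⌉ := hβα.trans_le (Int.le_ceil α)
    have hβceil : β ≤ ⌈α⌉ := (Int.lt_floor_add_one β).le.trans
      (mod_cast Int.add_one_le_of_lt (mod_cast hlt))
    exact ⟨0, .inr (by simpa [hceil] using ⟨hαβ, hβceil⟩)⟩
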